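/- Let H be a bipartite simple graph with finitely many edges such that every support vertex of H has degree at least 3. If a graph H' with H' ≠ H can be obtained from H by a finite sequence of operations (I), (II), (III), (I'), (II'), (III'), then H' has strictly more edges than H. -/

import Mathlib

open SimpleGraph

/-- Operation (I): add a pendant edge joining a support vertex `v` of `H`
to an isolated vertex `w` of `H`. -/
def OpI (H H' : SimpleGraph ℕ) : Prop :=
  ∃ v w : ℕ, v ∈ H.support ∧ w ∉ H.support ∧ H' = H ⊔ edge v w

/-- Operation (II): subdivide an edge `uv` of `H` using two distinct isolated
vertices `p, q` of `H`, i.e. delete `uv` and add the edges `up`, `pq`, `qv`. -/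
def OpII (H H' : SimpleGraph ℕ) : Prop :=
  ∃ u v p q : ℕ, H.Adj u v ∧ p ∉ H.support ∧ q ∉ H.support ∧ p ≠ q ∧
    H' = H.deleteEdges {s(u, v)} ⊔ edge u p ⊔ edge p q ⊔ edge q v

/-- Operation (III): for vertices `x, y` of `H` that are non-adjacent and have a
common neighbor `z`, add a new isolated vertex `w` of `H` together with the
edges `xw` and `wy`. -/
def OpIII (H H' : SimpleGraph ℕ) : Prop :=
  ∃ x y z w : ℕ, x ≠ y ∧ ¬ H.Adj x y ∧ H.Adj x z ∧ H.Adj y z ∧ w ∉ H.support ∧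
    H' = H ⊔ edge x w ⊔ edge w y

/-- One of the forward operations (I), (II), (III). -/
def OpFwd (H H' : SimpleGraph ℕ) : Prop := OpI H H' ∨ OpII H H' ∨ OpIII H H'

/-- One of the six operations (I), (II), (III), (I'), (II'), (III'):
the inverse operations are those whose inverse is a forward operation. -/
def OpAny (H H' : SimpleGraph ℕ) : Prop := OpFwd H H' ∨ OpFwd H' H

/-!
Read backwards, the three forward operations delete a vertex of degree one, contract a path whose
two inner vertices have degree two, and delete a degree-two corner of a four-cycle. These reductions
terminate, and on bipartite graphs they are locally confluent up to permuting vertices of degree at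
most two. Degrees of support vertices never decrease under the forward operations, so every vertex
of degree at least three in `H` keeps that degree, and the permutations fix all of `H`. Since all
support vertices of `H` have degree at least three, `H` admits no reduction, so by Newman's argument
every graph connected to `H` by operations is reached by forward operations alone, and each of these
adds edges.
-/

section GraphExpansion

open Relation

section Rewriting
variable {α : Type*} {r : α → α → Prop} {m : α}

/-- Newman's lemma read backwards, for an irreducible `m`. Instead of requiring `a' = b'`, the
joinability condition only asks that reachability from `m` passes from `a'` to `b'`. -/
theorem reflTransGen_of_acc_of_joinable (hmin : ∀ b, ¬ r b m)
    (hjoin : ∀ ⦃a b c⦄, ReflTransGen r m c → r a c → r b c → ∃ a' b', ReflTransGen r a' a ∧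
      ReflTransGen r b' b ∧ (ReflTransGen r m a' → ReflTransGen r m b'))
    {b c : α} (hacc : Acc r c) (hc : ReflTransGen r m c) (hb : ReflTransGen r b c) :
    ReflTransGen r m b := by
  induction hacc generalizing b with
  | intro c _ ih =>
    obtain rfl | ⟨b₁, hbb₁, hb₁⟩ := hb.cases_tail
    · exact hc
    obtain rfl | ⟨a, hma, ha⟩ := hc.cases_tail
    · exact (hmin b₁ hb₁).elim
    obtain ⟨a', b', haa', hbb', hab⟩ := hjoin hc ha hb₁
    have hma' : ReflTransGen r m a' := ih a ha hma haa'
    exact ih b₁ hb₁ ((hab hma').trans hbb') hbb₁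

theorem reflTransGen_of_symmGen (hmin : ∀ b, ¬ r b m)
    (hacc : ∀ c, ReflTransGen r m c → Acc r c)
    (hjoin : ∀ ⦃a b c⦄, ReflTransGen r m c → r a c → r b c → ∃ a' b', ReflTransGen r a' a ∧
      ReflTransGen r b' b ∧ (ReflTransGen r m a' → ReflTransGen r m b'))
    {c : α} (h : ReflTransGen (SymmGen r) m c) : ReflTransGen r m c := by
  induction h with
  | refl => exact .refl
  | tail _ hbc ih =>
    obtain hbc | hcb := hbc
    · exact ih.tail hbc
    · exact reflTransGen_of_acc_of_joinable hmin hjoin (hacc _ ih) ih (.single hcb)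

end Rewriting

variable {V : Type*}

/-- The forward operations (I), (II), (III), over an arbitrary vertex type: `Expands H G` means that
`G` is obtained from `H` by one of them. -/
inductive Expands (H : SimpleGraph V) : SimpleGraph V → Prop
  | pendant {v w : V} (hv : v ∈ H.support) (hw : w ∉ H.support) : Expands H (H ⊔ edge v w)
  | subdivide {u v p q : V} (huv : H.Adj u v) (hp : p ∉ H.support) (hq : q ∉ H.support)
      (hpq : p ≠ q) :
      Expands H (H.deleteEdges {s(u, v)} ⊔ edge u p ⊔ edge p q ⊔ edge q v)
  | square {x y z w : V} (hxy : x ≠ y) (hn : ¬ H.Adj x y) (hxz : H.Adj x z) (hyz : H.Adj y z)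
      (hw : w ∉ H.support) : Expands H (H ⊔ edge x w ⊔ edge w y)

theorem finite_edgeSet_sup_edge_iff {G : SimpleGraph V} {v w : V} :
    (G ⊔ edge v w).edgeSet.Finite ↔ G.edgeSet.Finite := by
  have hedge : (edge v w).edgeSet.Finite := (Set.finite_singleton _).subset edgeSet_edge_subset
  rw [edgeSet_sup, Set.finite_union, and_iff_left hedge]

theorem finite_edgeSet_deleteEdges_singleton_iff {G : SimpleGraph V} {e : Sym2 V} :
    (G.deleteEdges {e}).edgeSet.Finite ↔ G.edgeSet.Finite := by
  rw [edgeSet_deleteEdges]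
  exact ⟨fun h ↦ h.of_sdiff (Set.finite_singleton e), fun h ↦ h.sdiff⟩

theorem ncard_edgeSet_lt_ncard_edgeSet_sup_edge {G : SimpleGraph V} {v w : V}
    (hG : G.edgeSet.Finite) (hvw : v ≠ w) (hn : ¬ G.Adj v w) :
    G.edgeSet.ncard < (G ⊔ edge v w).edgeSet.ncard :=
  Set.ncard_lt_ncard (edgeSet_strict_mono (G.lt_sup_edge v w hvw hn))
    (finite_edgeSet_sup_edge_iff.2 hG)

theorem ncard_edgeSet_le_ncard_edgeSet_sup_edge {G : SimpleGraph V} (v w : V)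
    (hG : G.edgeSet.Finite) : G.edgeSet.ncard ≤ (G ⊔ edge v w).edgeSet.ncard :=
  Set.ncard_le_ncard (edgeSet_mono le_sup_left) (finite_edgeSet_sup_edge_iff.2 hG)

namespace Expands
variable {H G : SimpleGraph V}

theorem finite_edgeSet_iff (h : Expands H G) : G.edgeSet.Finite ↔ H.edgeSet.Finite := by
  cases h <;> simp only [finite_edgeSet_sup_edge_iff, finite_edgeSet_deleteEdges_singleton_iff]

theorem ncard_edgeSet_lt (h : Expands H G) (hH : H.edgeSet.Finite) :
    H.edgeSet.ncard < G.edgeSet.ncard := by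
  cases h with
  | @pendant v w hv hw =>
    exact ncard_edgeSet_lt_ncard_edgeSet_sup_edge hH (ne_of_mem_of_not_mem hv hw)
      fun h ↦ hw ⟨v, h.symm⟩
  | @subdivide u v p q huv hp hq hpq =>
    set D := H.deleteEdges {s(u, v)}
    have hpD (t : V) : ¬ D.Adj t p := fun h ↦ hp ⟨t, (deleteEdges_le _ h).symm⟩
    have hD : D.edgeSet.Finite := finite_edgeSet_deleteEdges_singleton_iff.2 hH
    have hup : u ≠ p := ne_of_mem_of_not_mem (H.mem_support.2 ⟨v, huv⟩) hp
    have hqD : ¬ (D ⊔ edge u p).Adj p q := by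
      grind [adj_comm, mem_support]
    calc H.edgeSet.ncard
        = D.edgeSet.ncard + 1 := by
          rw [edgeSet_deleteEdges, Set.ncard_sdiff_singleton_add_one (H.mem_edgeSet.2 huv) hH]
      _ ≤ (D ⊔ edge u p).edgeSet.ncard :=
          ncard_edgeSet_lt_ncard_edgeSet_sup_edge hD hup (hpD u)
      _ < (D ⊔ edge u p ⊔ edge p q).edgeSet.ncard :=
          ncard_edgeSet_lt_ncard_edgeSet_sup_edge (finite_edgeSet_sup_edge_iff.2 hD) hpq hqD
      _ ≤ _ := ncard_edgeSet_le_ncard_edgeSet_sup_edge q v <| by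
          simpa only [finite_edgeSet_sup_edge_iff]
  | @square x y z w hxy hn hxz hyz hw =>
    calc H.edgeSet.ncard
        < (H ⊔ edge x w).edgeSet.ncard :=
          ncard_edgeSet_lt_ncard_edgeSet_sup_edge hH
            (ne_of_mem_of_not_mem (H.mem_support.2 ⟨z, hxz⟩) hw) fun h ↦ hw ⟨x, h.symm⟩
      _ ≤ _ := ncard_edgeSet_le_ncard_edgeSet_sup_edge w y (finite_edgeSet_sup_edge_iff.2 hH)

theorem acc_of_finite_edgeSet (hG : G.edgeSet.Finite) : Acc Expands G := by
  induction hn : G.edgeSet.ncard using Nat.strong_induction_on generalizing G with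
  | _ n ih =>
    subst hn
    refine .intro _ fun A hAG ↦ ?_
    have hA : A.edgeSet.Finite := hAG.finite_edgeSet_iff.1 hG
    exact ih _ (hAG.ncard_edgeSet_lt hA) hA rfl

theorem nonempty_hom (h : Expands H G) : Nonempty (G →g H) := by
  classical
  cases h with
  | @pendant v w hv hw =>
    obtain ⟨t, hvt⟩ := hv
    refine ⟨⟨fun a ↦ if a = w then t else a, fun {a b} hab ↦ ?_⟩⟩
    grind [adj_comm, mem_support]
  | @subdivide u v p q huv hp hq hpq =>
    refine ⟨⟨fun a ↦ if a = p then v else if a = q then u else a, fun {a b} hab ↦ ?_⟩⟩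
    simp only [sup_adj, edge_adj, deleteEdges_adj] at hab
    grind [adj_comm, mem_support]
  | @square x y z w hxy hn hxz hyz hw =>
    refine ⟨⟨fun a ↦ if a = w then z else a, fun {a b} hab ↦ ?_⟩⟩
    grind [adj_comm, mem_support]

theorem encard_neighborSet_le (h : Expands H G) (a : V) :
    (H.neighborSet a).encard ≤ (G.neighborSet a).encard := by
  classical
  cases h with
  | pendant => exact Set.encard_le_encard fun b hab ↦ .inl hab
  | @subdivide u v p q huv hp hq hpq =>
    let f (b : V) : V := if a = u ∧ b = v then p else if a = v ∧ b = u then q else b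
    refine Set.encard_le_encard_of_injOn (f := f) (fun b hab ↦ ?_) (fun b hb c hc ↦ ?_)
    · simp only [mem_neighborSet, sup_adj, edge_adj, deleteEdges_adj, f] at hab ⊢
      grind [adj_comm, mem_support]
    · grind [mem_neighborSet, adj_comm, mem_support]
  | square => exact Set.encard_le_encard fun b hab ↦ .inl (.inl hab)

end Expands

section Comap
variable {W : Type*} {f : W → V} {G : SimpleGraph V}

theorem comap_edge (hf : f.Injective) (v w : W) :
    (edge (f v) (f w)).comap f = edge v w := by
  ext a b
  simp only [comap_adj, edge_adj, hf.eq_iff, hf.ne_iff]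

theorem comap_deleteEdges_singleton (hf : f.Injective) (v w : W) :
    (G.deleteEdges {s(f v, f w)}).comap f = (G.comap f).deleteEdges {s(v, w)} := by
  ext a b
  simp only [comap_adj, deleteEdges_adj, Set.mem_singleton_iff, Sym2.eq_iff, hf.eq_iff]

theorem comap_sup (f : W → V) (G₁ G₂ : SimpleGraph V) :
    (G₁ ⊔ G₂).comap f = G₁.comap f ⊔ G₂.comap f :=
  rfl

theorem mem_support_comap_iff (σ : W ≃ V) {w : W} :
    w ∈ (G.comap σ).support ↔ σ w ∈ G.support := by
  simp only [mem_support, comap_adj, σ.surjective.exists]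

theorem Expands.comap {H : SimpleGraph V} (h : Expands H G) (σ : W ≃ V) :
    Expands (H.comap σ) (G.comap σ) := by
  cases h with
  | @pendant v w hv hw =>
    obtain ⟨v, rfl⟩ := σ.surjective v
    obtain ⟨w, rfl⟩ := σ.surjective w
    rw [← mem_support_comap_iff] at hv hw
    simpa only [comap_sup, comap_edge σ.injective] using pendant hv hw
  | @subdivide u v p q huv hp hq hpq =>
    obtain ⟨u, rfl⟩ := σ.surjective u
    obtain ⟨v, rfl⟩ := σ.surjective v
    obtain ⟨p, rfl⟩ := σ.surjective p
    obtain ⟨q, rfl⟩ := σ.surjective q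
    rw [← mem_support_comap_iff] at hp hq
    simpa only [comap_sup, comap_edge σ.injective, comap_deleteEdges_singleton σ.injective] using
      subdivide (H := H.comap σ) huv hp hq (σ.injective.ne_iff.1 hpq)
  | @square x y z w hxy hn hxz hyz hw =>
    obtain ⟨x, rfl⟩ := σ.surjective x
    obtain ⟨y, rfl⟩ := σ.surjective y
    obtain ⟨z, rfl⟩ := σ.surjective z
    obtain ⟨w, rfl⟩ := σ.surjective w
    rw [← mem_support_comap_iff] at hw
    simpa only [comap_sup, comap_edge σ.injective] using
      square (H := H.comap σ) (σ.injective.ne_iff.1 hxy) hn hxz hyz hw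

theorem comap_eq_self_of_forall_mem_support {H : SimpleGraph V} {σ : Equiv.Perm V}
    (hσ : ∀ v ∈ H.support, σ v = v) : H.comap σ = H := by
  have hσ' (v : V) (hv : σ v ∈ H.support) : σ v = v := σ.injective (hσ _ hv)
  ext a b
  rw [comap_adj]
  grind [mem_support, adj_comm]

theorem reflTransGen_expands_comap {H : SimpleGraph V} {σ : Equiv.Perm V}
    (hσ : ∀ v ∈ H.support, σ v = v) (h : ReflTransGen Expands H G) :
    ReflTransGen Expands H (G.comap σ) := by
  rw [← comap_eq_self_of_forall_mem_support hσ]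
  exact h.lift (SimpleGraph.comap σ) fun _ _ h ↦ h.comap σ

end Comap

/-- `w` is a vertex of degree one hanging at `v`, and deleting it leaves `v` in the support: the
configuration undone by operation (I'). -/
structure IsPendant (G : SimpleGraph V) (v w : V) : Prop where
  exists_adj : ∃ t ≠ w, G.Adj v t
  adj_iff (t : V) : G.Adj w t ↔ t = v

/-- `u - p - q - v` is a path with inner vertices `p`, `q` of degree two and distinct non-adjacent
ends: the configuration undone by operation (II'). -/
structure IsThread (G : SimpleGraph V) (u p q v : V) : Prop where
  adj_left_iff (t : V) : G.Adj p t ↔ t = u ∨ t = q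
  adj_right_iff (t : V) : G.Adj q t ↔ t = p ∨ t = v
  left_ne : u ≠ q
  right_ne : p ≠ v
  ends_ne : u ≠ v
  not_adj : ¬ G.Adj u v

/-- `w` is a vertex of degree two with neighbours `x` and `y`, in a four-cycle `x - w - y - z`
without the chord `xy`: the configuration undone by operation (III'). -/
structure IsSquareCorner (G : SimpleGraph V) (x y z w : V) : Prop where
  ne : x ≠ y
  not_adj : ¬ G.Adj x y
  adj_left : G.Adj x z
  adj_right : G.Adj y z
  opposite_ne : z ≠ w
  adj_iff (t : V) : G.Adj w t ↔ t = x ∨ t = y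

/-- Replaces the path `u - p - q - v` by the edge `uv`, the effect of operation (II'). The vertices
`p`, `q` stay in the vertex type as isolated vertices. -/
def contractThread (G : SimpleGraph V) (u p q v : V) : SimpleGraph V :=
  (G.deleteIncidenceSet p).deleteIncidenceSet q ⊔ edge u v

variable {A G : SimpleGraph V} {u v w x y z p q u' v' w' x' y' z' p' q' : V}

theorem contractThread_adj {a b : V} : (contractThread G u p q v).Adj a b ↔
    (G.Adj a b ∧ a ≠ p ∧ a ≠ q ∧ b ≠ p ∧ b ≠ q) ∨ (edge u v).Adj a b := by
  simp only [contractThread, sup_adj, deleteIncidenceSet_adj]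
  tauto

theorem IsPendant.adj (h : IsPendant G v w) : G.Adj v w :=
  ((h.adj_iff v).2 rfl).symm

theorem IsPendant.expands (h : IsPendant G v w) : Expands (G.deleteIncidenceSet w) G := by
  obtain ⟨⟨t, htw, hvt⟩, hw⟩ := h
  have hG : G = G.deleteIncidenceSet w ⊔ edge v w := by
    ext a b
    grind [deleteIncidenceSet_adj, adj_comm]
  conv_rhs => rw [hG]
  apply Expands.pendant <;> grind [mem_support, deleteIncidenceSet_adj]

theorem IsThread.adj_left (h : IsThread G u p q v) : G.Adj u p :=
  ((h.adj_left_iff u).2 (.inl rfl)).symm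

theorem IsThread.adj_inner (h : IsThread G u p q v) : G.Adj p q :=
  (h.adj_left_iff q).2 (.inr rfl)

theorem IsThread.adj_right (h : IsThread G u p q v) : G.Adj q v :=
  (h.adj_right_iff v).2 (.inr rfl)

theorem IsThread.expands (h : IsThread G u p q v) : Expands (contractThread G u p q v) G := by
  have hup := h.adj_left.ne
  have hpq := h.adj_inner.ne
  have hqv := h.adj_right.ne
  obtain ⟨hp, hq, huq, hpv, huv, hn⟩ := h
  have hG : G = (contractThread G u p q v).deleteEdges {s(u, v)} ⊔ edge u p ⊔ edge p q ⊔
      edge q v := by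
    ext a b
    simp only [sup_adj, deleteEdges_adj, contractThread_adj, edge_adj, Set.mem_singleton_iff,
      Sym2.eq_iff]
    grind [adj_comm]
  conv_rhs => rw [hG]
  clear hG
  apply Expands.subdivide <;> grind [mem_support, contractThread_adj, adj_comm]

theorem IsSquareCorner.adj_corner_left (h : IsSquareCorner G x y z w) : G.Adj x w :=
  ((h.adj_iff x).2 (.inl rfl)).symm

theorem IsSquareCorner.adj_corner_right (h : IsSquareCorner G x y z w) : G.Adj y w :=
  ((h.adj_iff y).2 (.inr rfl)).symm

theorem IsSquareCorner.expands (h : IsSquareCorner G x y z w) :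
    Expands (G.deleteIncidenceSet w) G := by
  obtain ⟨hxy, hn, hxz, hyz, hzw, hw⟩ := h
  have hG : G = G.deleteIncidenceSet w ⊔ edge x w ⊔ edge w y := by
    ext a b
    grind [deleteIncidenceSet_adj, adj_comm]
  conv_rhs => rw [hG]
  apply Expands.square (z := z) <;> grind [mem_support, deleteIncidenceSet_adj, adj_comm]

theorem Expands.exists_reduction (h : Expands A G) :
    (∃ v w, IsPendant G v w ∧ A = G.deleteIncidenceSet w) ∨
    (∃ u p q v, IsThread G u p q v ∧ A = contractThread G u p q v) ∨
    (∃ x y z w, IsSquareCorner G x y z w ∧ A = G.deleteIncidenceSet w) := by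
  cases h with
  | @pendant v w hv hw =>
    obtain ⟨t, hvt⟩ := hv
    have htw : t ≠ w := ne_of_mem_of_not_mem (A.mem_support.2 ⟨v, hvt.symm⟩) hw
    refine .inl ⟨v, w, ⟨⟨t, htw, .inl hvt⟩, fun s ↦ ?_⟩, ?_⟩
    · grind [mem_support, → Adj.ne]
    · ext a b
      grind [deleteIncidenceSet_adj, mem_support, adj_comm]
  | @subdivide u v p q huv hp hq hpq =>
    refine .inr (.inl ⟨u, p, q, v, ⟨fun t ↦ ?_, fun t ↦ ?_, ?_, ?_, huv.ne, ?_⟩, ?_⟩)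
    any_goals grind [mem_support, deleteEdges_adj, adj_comm, → Adj.ne]
    ext a b
    simp only [contractThread_adj, sup_adj, deleteEdges_adj, edge_adj, Set.mem_singleton_iff,
      Sym2.eq_iff]
    grind [mem_support, adj_comm, → Adj.ne]
  | @square x y z w hxy hn hxz hyz hw =>
    refine .inr (.inr ⟨x, y, z, w, ⟨hxy, ?_, .inl (.inl hxz), .inl (.inl hyz), ?_, fun t ↦ ?_⟩, ?_⟩)
    any_goals grind [mem_support, adj_comm]
    ext a b
    grind [deleteIncidenceSet_adj, mem_support, adj_comm]

theorem contractThread_symm (G : SimpleGraph V) (u p q v : V) :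
    contractThread G u p q v = contractThread G v q p u := by
  ext a b
  grind [contractThread_adj]

theorem IsThread.symm (h : IsThread G u p q v) : IsThread G v q p u where
  adj_left_iff t := (h.adj_right_iff t).trans or_comm
  adj_right_iff t := (h.adj_left_iff t).trans or_comm
  left_ne := h.right_ne.symm
  right_ne := h.left_ne.symm
  ends_ne := h.ends_ne.symm
  not_adj hvu := h.not_adj hvu.symm

theorem IsSquareCorner.symm (h : IsSquareCorner G x y z w) : IsSquareCorner G y x z w where
  ne := h.ne.symm
  not_adj hyx := h.not_adj hyx.symm
  adj_left := h.adj_right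
  adj_right := h.adj_left
  opposite_ne := h.opposite_ne
  adj_iff t := (h.adj_iff t).trans or_comm

section Commute

theorem deleteIncidenceSet_comm (G : SimpleGraph V) (w w' : V) :
    (G.deleteIncidenceSet w).deleteIncidenceSet w' =
      (G.deleteIncidenceSet w').deleteIncidenceSet w := by
  ext a b
  grind [deleteIncidenceSet_adj]

theorem contractThread_deleteIncidenceSet_comm (p q : V) (hu : u ≠ w) (hv : v ≠ w) :
    contractThread (G.deleteIncidenceSet w) u p q v =
      (contractThread G u p q v).deleteIncidenceSet w := by
  ext a b
  grind [deleteIncidenceSet_adj, contractThread_adj]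

theorem contractThread_comm (hp : p ∉ ({u', v'} : Set V)) (hq : q ∉ ({u', v'} : Set V))
    (hp' : p' ∉ ({u, v} : Set V)) (hq' : q' ∉ ({u, v} : Set V)) :
    contractThread (contractThread G u p q v) u' p' q' v' =
      contractThread (contractThread G u' p' q' v') u p q v := by
  ext a b
  grind [contractThread_adj]

theorem IsPendant.isPendant_deleteIncidenceSet (h : IsPendant G v w) (hv : v ≠ w') (hw : w ≠ w')
    (ht : ∃ t ≠ w, t ≠ w' ∧ G.Adj v t) : IsPendant (G.deleteIncidenceSet w') v w := by
  obtain ⟨t, htw, htw', hvt⟩ := ht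
  refine ⟨⟨t, htw, ?_⟩, fun s ↦ ?_⟩ <;> grind [deleteIncidenceSet_adj, IsPendant]

theorem IsPendant.ne_of_isThread (h : IsPendant G v' w) (ht : IsThread G u p q v) : w ≠ p := by
  rintro rfl
  have hu : u = v' := (h.adj_iff u).1 ht.adj_left.symm
  have hq : q = v' := (h.adj_iff q).1 ht.adj_inner
  exact ht.left_ne (hu.trans hq.symm)

theorem IsPendant.isPendant_contractThread (h : IsPendant G v' w) (ht : IsThread G u p q v)
    (hu : w ≠ u) (hv : w ≠ v) : IsPendant (contractThread G u p q v) v' w := by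
  have hwp := h.ne_of_isThread ht
  have hwq := h.ne_of_isThread ht.symm
  have hvw := h.adj
  obtain ⟨⟨t, htw, hvt⟩, hw⟩ := h
  obtain ⟨hp, hq, -, -, huv, -⟩ := ht
  have hvp : v' ≠ p := by grind
  have hvq : v' ≠ q := by grind
  refine ⟨?_, fun s ↦ by grind [contractThread_adj]⟩
  by_cases htp : t = p
  · exact ⟨v, by grind [contractThread_adj, adj_comm]⟩
  by_cases htq : t = q
  · exact ⟨u, by grind [contractThread_adj, adj_comm]⟩
  · exact ⟨t, by grind [contractThread_adj]⟩

theorem IsThread.isThread_deleteIncidenceSet (h : IsThread G u p q v) (hu : u ≠ w) (hp : p ≠ w)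
    (hq : q ≠ w) (hv : v ≠ w) : IsThread (G.deleteIncidenceSet w) u p q v := by
  constructor <;> grind [deleteIncidenceSet_adj, IsThread]

theorem IsThread.isThread_contractThread (h : IsThread G u p q v) (h' : IsThread G u' p' q' v')
    (hp' : p' ∉ ({u, p, q, v} : Set V)) (hq' : q' ∉ ({u, p, q, v} : Set V))
    (hends : ¬ (edge u' v').Adj u v) : IsThread (contractThread G u' p' q' v') u p q v := by
  have hup' := h'.adj_left
  have hqv' := h'.adj_right
  constructor <;> grind [contractThread_adj, IsThread, adj_comm]

theorem IsSquareCorner.notMem_of_isThread (h : IsSquareCorner G x y z w) (ht : IsThread G u p q v) :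
    p ∉ ({x, y, z, w} : Set V) := by
  have hxw := h.adj_corner_left
  have hyw := h.adj_corner_right
  grind [IsSquareCorner, IsThread, adj_comm]

theorem IsSquareCorner.isSquareCorner_deleteIncidenceSet (h : IsSquareCorner G x y z w)
    (hw' : w' ∉ ({x, y, z, w} : Set V)) :
    IsSquareCorner (G.deleteIncidenceSet w') x y z w := by
  constructor <;> grind [deleteIncidenceSet_adj, IsSquareCorner]

theorem IsSquareCorner.isSquareCorner_contractThread (h : IsSquareCorner G x y z w)
    (ht : IsThread G u p q v) (hends : ¬ (edge u v).Adj x y) :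
    IsSquareCorner (contractThread G u p q v) x y z w := by
  have hp := h.notMem_of_isThread ht
  have hq := h.notMem_of_isThread ht.symm
  have hup := ht.adj_left
  have hqv := ht.adj_right
  constructor <;> grind [IsSquareCorner, contractThread_adj, adj_comm]

end Commute

section Relabel

/-- The vertices of degree at least three, infinite degrees included. -/
def branchSet (G : SimpleGraph V) : Set V :=
  {v | 3 ≤ (G.neighborSet v).encard}

theorem notMem_branchSet (h : ∀ t, G.Adj w t → t = x ∨ t = y) : w ∉ branchSet G := by
  have hcard : (G.neighborSet w).encard ≤ 2 :=
    calc (G.neighborSet w).encard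
      _ ≤ ({x, y} : Set V).encard := Set.encard_le_encard h
      _ ≤ ({y} : Set V).encard + 1 := Set.encard_insert_le {y} x
      _ = 2 := by rw [Set.encard_singleton, one_add_one_eq_two]
  exact fun hw ↦ absurd (le_trans hw hcard) (by norm_num)

theorem IsPendant.notMem_branchSet (h : IsPendant G v w) : w ∉ branchSet G :=
  _root_.notMem_branchSet (x := v) (y := v) fun t ht ↦ .inl ((h.adj_iff t).1 ht)

theorem IsThread.left_notMem_branchSet (h : IsThread G u p q v) : p ∉ branchSet G :=
  notMem_branchSet fun t ↦ (h.adj_left_iff t).1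

theorem IsThread.right_notMem_branchSet (h : IsThread G u p q v) : q ∉ branchSet G :=
  notMem_branchSet fun t ↦ (h.adj_right_iff t).1

theorem IsSquareCorner.notMem_branchSet (h : IsSquareCorner G x y z w) : w ∉ branchSet G :=
  _root_.notMem_branchSet fun t ↦ (h.adj_iff t).1

theorem Expands.branchSet_subset (h : Expands A G) : branchSet A ⊆ branchSet G :=
  fun v hv ↦ le_trans hv (h.encard_neighborSet_le v)

theorem Expands.not_support_subset_branchSet (h : Expands A G) : ¬ G.support ⊆ branchSet G := by
  intro hG
  obtain ⟨v, w, h, -⟩ | ⟨u, p, q, v, h, -⟩ | ⟨x, y, z, w, h, -⟩ := h.exists_reduction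
  · exact h.notMem_branchSet (hG ⟨v, (h.adj_iff v).2 rfl⟩)
  · exact h.left_notMem_branchSet (hG ⟨q, h.adj_inner⟩)
  · exact h.notMem_branchSet (hG ⟨x, (h.adj_iff x).2 (.inl rfl)⟩)

/-- `A` and `B` agree up to a permutation of the vertices that fixes `S` pointwise. -/
def RelabelEquiv (S : Set V) (A B : SimpleGraph V) : Prop :=
  ∃ σ : Equiv.Perm V, (∀ v ∈ S, σ v = v) ∧ B.comap σ = A

variable {S : Set V} {B C D : SimpleGraph V}

theorem RelabelEquiv.refl (S : Set V) (A : SimpleGraph V) : RelabelEquiv S A A :=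
  ⟨1, fun _ _ ↦ rfl, rfl⟩

theorem RelabelEquiv.symm (h : RelabelEquiv S A B) : RelabelEquiv S B A := by
  obtain ⟨σ, hσ, rfl⟩ := h
  refine ⟨σ.symm, fun v hv ↦ σ.symm_apply_eq.2 (hσ v hv).symm, ?_⟩
  ext a b
  rw [comap_adj, comap_adj, σ.apply_symm_apply, σ.apply_symm_apply]

theorem RelabelEquiv.trans (hAB : RelabelEquiv S A B) (hBC : RelabelEquiv S B C) :
    RelabelEquiv S A C := by
  obtain ⟨σ, hσ, rfl⟩ := hAB
  obtain ⟨τ, hτ, rfl⟩ := hBC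
  exact ⟨τ * σ, fun v hv ↦ by rw [Equiv.Perm.mul_apply, hσ v hv, hτ v hv], rfl⟩

theorem relabelEquiv_of_comap_swap [DecidableEq V] {a b : V} (ha : a ∉ S) (hb : b ∉ S)
    (h : B.comap (Equiv.swap a b) = A) : RelabelEquiv S A B :=
  ⟨Equiv.swap a b, fun _ hv ↦ Equiv.swap_apply_of_ne_of_ne (ne_of_mem_of_not_mem hv ha)
    (ne_of_mem_of_not_mem hv hb), h⟩

/-- Confluence of two reductions: `A` and `B` can be reduced, by undoing forward operations, to
graphs that agree up to relabelling vertices outside `S`. -/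
def Joinable (S : Set V) (A B : SimpleGraph V) : Prop :=
  ∃ A' B', ReflTransGen Expands A' A ∧ ReflTransGen Expands B' B ∧ RelabelEquiv S A' B'

theorem RelabelEquiv.joinable (h : RelabelEquiv S A B) : Joinable S A B :=
  ⟨A, B, .refl, .refl, h⟩

theorem Joinable.symm (h : Joinable S A B) : Joinable S B A :=
  let ⟨A', B', hA, hB, hAB⟩ := h
  ⟨B', A', hB, hA, hAB.symm⟩

theorem Joinable.of_expands (hA : Expands D A) (hB : Expands D B) : Joinable S A B :=
  ⟨D, D, .single hA, .single hB, .refl S D⟩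

theorem relabelEquiv_deleteIncidenceSet_of_twins (hw : w ∉ S) (hw' : w' ∉ S)
    (h : ∀ t, G.Adj w t ↔ G.Adj w' t) :
    RelabelEquiv S (G.deleteIncidenceSet w) (G.deleteIncidenceSet w') := by
  classical
  refine relabelEquiv_of_comap_swap hw hw' ?_
  ext a b
  grind [deleteIncidenceSet_adj, comap_adj, adj_comm, → Adj.ne]

end Relabel

theorem comap_contractThread {W : Type*} {f : W → V} (hf : f.Injective) (u p q v : W) :
    (contractThread G (f u) (f p) (f q) (f v)).comap f = contractThread (G.comap f) u p q v := by
  ext a b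
  simp only [comap_adj, contractThread_adj, edge_adj, hf.eq_iff, hf.ne_iff]

theorem IsThread.relabelEquiv_of_parallel (h : IsThread G u p q v) (h' : IsThread G u p' q' v) :
    RelabelEquiv (branchSet G) (contractThread G u p q v) (contractThread G u p' q' v) := by
  classical
  by_cases hpp : p = p'
  · obtain rfl : q = q' := by grind [IsThread, h'.adj_inner]
    subst hpp
    exact .refl _ _
  have hup := h.adj_left
  have hpq := h.adj_inner
  have hqv := h.adj_right
  have hup' := h'.adj_left
  have hpq' := h'.adj_inner
  have hqv' := h'.adj_right
  have hdisj : p ≠ q' ∧ q ≠ p' ∧ q ≠ q' := by grind [IsThread, adj_comm, → Adj.ne]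
  set σ := Equiv.swap p p' * Equiv.swap q q'
  have hσa (a : V) : σ a = if a = p then p' else if a = p' then p else if a = q then q' else
      if a = q' then q else a := by
    grind [Equiv.Perm.mul_apply, → Adj.ne]
  have hG : G.comap σ = G := by
    ext a b
    grind [comap_adj, IsThread, adj_comm, → Adj.ne]
  refine ⟨σ, fun a ha ↦ ?_, ?_⟩
  · grind [IsThread.left_notMem_branchSet, IsThread.right_notMem_branchSet]
  · obtain ⟨hσu, hσp, hσq, hσv⟩ : σ u = u ∧ σ p = p' ∧ σ q = q' ∧ σ v = v := by
      grind [IsThread, → Adj.ne]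
    simpa only [hσu, hσp, hσq, hσv, hG] using comap_contractThread (G := G) σ.injective u p q v

theorem IsThread.relabelEquiv_slide (h : IsThread G u p q v) (h' : IsThread G p q v v') :
    RelabelEquiv (branchSet G) (contractThread G u p q v) (contractThread G p q v v') := by
  classical
  refine relabelEquiv_of_comap_swap h.left_notMem_branchSet h'.right_notMem_branchSet ?_
  have hup := h.adj_left
  have hqv := h.adj_right
  have hvv := h'.adj_right
  ext a b
  rw [comap_adj, contractThread_adj, contractThread_adj]
  grind [IsThread, adj_comm, → Adj.ne]

theorem IsThread.relabelEquiv_of_overlap (h : IsThread G u p q v) (h' : IsThread G u' q q' v') :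
    RelabelEquiv (branchSet G) (contractThread G u p q v) (contractThread G u' q q' v') := by
  obtain rfl | rfl : q' = p ∨ q' = v := (h.adj_right_iff q').1 h'.adj_inner
  · obtain rfl : u' = v := by grind [IsThread, h'.adj_left, adj_comm]
    obtain rfl : v' = u := by grind [IsThread, h'.adj_right, adj_comm]
    rw [contractThread_symm]
    exact .refl _ _
  · obtain rfl : u' = p := by grind [IsThread, h'.adj_left, adj_comm]
    exact h.relabelEquiv_slide h'

theorem IsThread.relabelEquiv_of_meet (h : IsThread G u p q p') (h' : IsThread G u' p' q' v')
    (hpq' : p ≠ q') (hqq' : q ≠ q') :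
    RelabelEquiv (branchSet G) (contractThread G u p q p') (contractThread G u' p' q' v') := by
  obtain rfl : u' = q := by grind [IsThread, h.adj_right, adj_comm]
  -- The middle of the path `u p q p' q' v'` is a thread too, so two slides suffice.
  have hmid : IsThread G p u' p' q' := by
    refine ⟨h.adj_right_iff, h'.adj_left_iff, h.right_ne, hqq', hpq', ?_⟩
    grind [IsThread, h.adj_inner, h'.adj_right, adj_comm]
  exact (h.relabelEquiv_slide hmid).trans (hmid.relabelEquiv_slide h')

section Confluence

theorem not_adj_of_colorable_two_of_path {a b c d e : V} (hG : G.Colorable 2) (hab : G.Adj a b)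
    (hbc : G.Adj b c) (hcd : G.Adj c d) (hde : G.Adj d e) : ¬ G.Adj e a := by
  intro hea
  have heven := two_colorable_iff_forall_loop_even.1 hG a
    (.cons hab (.cons hbc (.cons hcd (.cons hde hea.toWalk))))
  simp only [Walk.length_cons, Walk.length_nil] at heven
  exact absurd heven (by decide)

theorem IsPendant.joinable (h : IsPendant G v w) (h' : IsPendant G v' w') :
    Joinable (branchSet G) (G.deleteIncidenceSet w) (G.deleteIncidenceSet w') := by
  by_cases hvv : v = v'
  · subst hvv
    exact (relabelEquiv_deleteIncidenceSet_of_twins h.notMem_branchSet h'.notMem_branchSet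
      fun t ↦ (h.adj_iff t).trans (h'.adj_iff t).symm).joinable
  have hadj := h.adj
  have hadj' := h'.adj
  have hww : w ≠ w' := by grind [IsPendant, adj_comm]
  have hvw : v ≠ w' := by grind [IsPendant]
  have hvw' : v' ≠ w := by grind [IsPendant]
  refine .of_expands (D := (G.deleteIncidenceSet w).deleteIncidenceSet w') ?_ ?_
  · refine (h'.isPendant_deleteIncidenceSet hvw' hww.symm ?_).expands
    grind [IsPendant, adj_comm]
  · rw [deleteIncidenceSet_comm]
    refine (h.isPendant_deleteIncidenceSet hvw hww ?_).expands
    grind [IsPendant, adj_comm]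

theorem IsPendant.joinable_isThread_end (h : IsPendant G v' w) (ht : IsThread G w p q v) :
    Joinable (branchSet G) (G.deleteIncidenceSet w) (contractThread G w p q v) := by
  classical
  have hwp := ht.adj_left
  have hpq := ht.adj_inner
  have hqv := ht.adj_right
  have hp : IsPendant (G.deleteIncidenceSet w) q p := by
    refine ⟨⟨v, ?_⟩, fun t ↦ ?_⟩ <;> grind [IsThread, deleteIncidenceSet_adj, → Adj.ne]
  refine ⟨_, _, .single hp.expands, .refl,
    relabelEquiv_of_comap_swap h.notMem_branchSet ht.right_notMem_branchSet ?_⟩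
  ext a b
  rw [comap_adj, contractThread_adj, deleteIncidenceSet_adj, deleteIncidenceSet_adj]
  grind [IsThread, IsPendant, adj_comm, → Adj.ne]

theorem IsPendant.joinable_isThread (h : IsPendant G v' w) (ht : IsThread G u p q v) :
    Joinable (branchSet G) (G.deleteIncidenceSet w) (contractThread G u p q v) := by
  by_cases hu : w = u
  · subst hu
    exact h.joinable_isThread_end ht
  by_cases hv : w = v
  · subst hv
    rw [contractThread_symm]
    exact h.joinable_isThread_end ht.symm
  have hwp := h.ne_of_isThread ht
  have hwq := h.ne_of_isThread ht.symm
  refine .of_expands (D := (contractThread G u p q v).deleteIncidenceSet w) ?_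
    (h.isPendant_contractThread ht hu hv).expands
  rw [← contractThread_deleteIncidenceSet_comm p q (Ne.symm hu) (Ne.symm hv)]
  exact (ht.isThread_deleteIncidenceSet (Ne.symm hu) hwp.symm hwq.symm (Ne.symm hv)).expands

theorem IsPendant.joinable_isSquareCorner (h : IsPendant G v w)
    (hc : IsSquareCorner G x y z w') :
    Joinable (branchSet G) (G.deleteIncidenceSet w) (G.deleteIncidenceSet w') := by
  have hvw := h.adj
  have hxw := hc.adj_corner_left
  have hyw := hc.adj_corner_right
  have hw : w ∉ ({x, y, z, w'} : Set V) := by grind [IsPendant, IsSquareCorner, adj_comm]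
  have hvw' : v ≠ w' := by grind [IsSquareCorner]
  have ht : ∃ t ≠ w, t ≠ w' ∧ G.Adj v t := by grind [IsPendant, IsSquareCorner, adj_comm]
  refine .of_expands (hc.isSquareCorner_deleteIncidenceSet hw).expands ?_
  rw [deleteIncidenceSet_comm]
  exact (h.isPendant_deleteIncidenceSet hvw' (by grind) ht).expands

theorem IsThread.joinable_of_disjoint (h : IsThread G u p q v) (h' : IsThread G u' p' q' v')
    (hp' : p' ∉ ({u, p, q, v} : Set V)) (hq' : q' ∉ ({u, p, q, v} : Set V)) :
    Joinable (branchSet G) (contractThread G u p q v) (contractThread G u' p' q' v') := by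
  by_cases hends : (edge u v).Adj u' v'
  · obtain ⟨⟨rfl, rfl⟩ | ⟨rfl, rfl⟩, -⟩ := (edge_adj ..).1 hends
    · exact (h.relabelEquiv_of_parallel h').joinable
    · rw [contractThread_symm G u']
      exact (h.relabelEquiv_of_parallel h'.symm).joinable
  have hup' := h'.adj_left
  have hqv' := h'.adj_right
  have hp : p ∉ ({u', p', q', v'} : Set V) := by grind [IsThread, adj_comm]
  have hq : q ∉ ({u', p', q', v'} : Set V) := by grind [IsThread, adj_comm]
  refine .of_expands (h'.isThread_contractThread h hp hq hends).expands ?_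
  rw [contractThread_comm (by grind) (by grind) (by grind) (by grind)]
  exact (h.isThread_contractThread h' hp' hq' (by grind)).expands

theorem IsThread.relabelEquiv_of_inner_eq_inner (h : IsThread G u p q v)
    (h' : IsThread G u' p' q' v') (hp' : p' = p ∨ p' = q) :
    RelabelEquiv (branchSet G) (contractThread G u p q v) (contractThread G u' p' q' v') := by
  obtain rfl | rfl := hp'
  · rw [contractThread_symm G u]
    exact h.symm.relabelEquiv_of_overlap h'
  · exact h.relabelEquiv_of_overlap h'

theorem IsThread.relabelEquiv_of_inner_eq_end (h : IsThread G u p q v)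
    (h' : IsThread G u' p' q' v') (hq' : ¬ (q' = p ∨ q' = q)) (hp' : p' = u ∨ p' = v) :
    RelabelEquiv (branchSet G) (contractThread G u p q v) (contractThread G u' p' q' v') := by
  obtain ⟨hqp, hqq⟩ := not_or.1 hq'
  obtain rfl | rfl := hp'
  · rw [contractThread_symm G p']
    exact h.symm.relabelEquiv_of_meet h' (Ne.symm hqq) (Ne.symm hqp)
  · exact h.relabelEquiv_of_meet h' (Ne.symm hqp) (Ne.symm hqq)

theorem IsThread.joinable (h : IsThread G u p q v) (h' : IsThread G u' p' q' v') :
    Joinable (branchSet G) (contractThread G u p q v) (contractThread G u' p' q' v') := by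
  by_cases hp_inner : p' = p ∨ p' = q
  · exact (h.relabelEquiv_of_inner_eq_inner h' hp_inner).joinable
  by_cases hq_inner : q' = p ∨ q' = q
  · rw [contractThread_symm G u']
    exact (h.relabelEquiv_of_inner_eq_inner h'.symm hq_inner).joinable
  by_cases hp_end : p' = u ∨ p' = v
  · exact (h.relabelEquiv_of_inner_eq_end h' hq_inner hp_end).joinable
  by_cases hq_end : q' = u ∨ q' = v
  · rw [contractThread_symm G u']
    exact (h.relabelEquiv_of_inner_eq_end h'.symm hp_inner hq_end).joinable
  exact h.joinable_of_disjoint h' (by grind) (by grind)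

theorem IsSquareCorner.joinable_isThread (hG : G.Colorable 2) (h : IsSquareCorner G x y z w)
    (ht : IsThread G u p q v) :
    Joinable (branchSet G) (G.deleteIncidenceSet w) (contractThread G u p q v) := by
  have hp := h.notMem_of_isThread ht
  have hq := h.notMem_of_isThread ht.symm
  have hup := ht.adj_left
  have hqv := ht.adj_right
  have huw : u ≠ w := by grind [IsSquareCorner]
  have hvw : v ≠ w := by grind [IsSquareCorner, adj_comm]
  -- Otherwise contracting the thread would join `x` to `y`; but then `u p q v z` is a 5-cycle.
  have hends : ¬ (edge u v).Adj x y := by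
    have hvzu (hvz : G.Adj v z) : ¬ G.Adj z u :=
      not_adj_of_colorable_two_of_path hG hup ht.adj_inner hqv hvz
    grind [IsSquareCorner, adj_comm]
  refine .of_expands ?_ (h.isSquareCorner_contractThread ht hends).expands
  rw [← contractThread_deleteIncidenceSet_comm p q huw hvw]
  exact (ht.isThread_deleteIncidenceSet huw (by grind) (by grind) hvw).expands

theorem IsSquareCorner.joinable_of_adj (h : IsSquareCorner G w' y z w)
    (h' : IsSquareCorner G x' y' z' w') :
    Joinable (branchSet G) (G.deleteIncidenceSet w) (G.deleteIncidenceSet w') := by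
  have hww := h.adj_corner_left
  have hyw := h.adj_corner_right
  have hw' (t : V) : G.Adj w' t ↔ t = w ∨ t = z := by grind [IsSquareCorner]
  have hpendant : IsPendant (G.deleteIncidenceSet w) z w' := by
    refine ⟨⟨y, ?_⟩, fun t ↦ ?_⟩ <;>
      grind [IsSquareCorner, deleteIncidenceSet_adj, adj_comm, → Adj.ne]
  have hpendant' : IsPendant (G.deleteIncidenceSet w') y w := by
    refine ⟨⟨z, ?_⟩, fun t ↦ ?_⟩ <;>
      grind [IsSquareCorner, deleteIncidenceSet_adj, adj_comm, → Adj.ne]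
  refine .of_expands hpendant.expands ?_
  rw [deleteIncidenceSet_comm]
  exact hpendant'.expands

theorem IsSquareCorner.joinable (h : IsSquareCorner G x y z w)
    (h' : IsSquareCorner G x' y' z' w') :
    Joinable (branchSet G) (G.deleteIncidenceSet w) (G.deleteIncidenceSet w') := by
  by_cases hadj : G.Adj w w'
  · obtain rfl | rfl := (h.adj_iff w').1 hadj
    · exact h.joinable_of_adj h'
    · exact h.symm.joinable_of_adj h'
  by_cases htwins : ∀ t, G.Adj w t ↔ G.Adj w' t
  · exact (relabelEquiv_deleteIncidenceSet_of_twins h.notMem_branchSet h'.notMem_branchSet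
      htwins).joinable
  have hw : w ∉ ({x', y', z', w'} : Set V) := by grind [IsSquareCorner, adj_comm]
  have hw' : w' ∉ ({x, y, z, w} : Set V) := by grind [IsSquareCorner, adj_comm]
  refine .of_expands (h'.isSquareCorner_deleteIncidenceSet hw).expands ?_
  rw [deleteIncidenceSet_comm]
  exact (h.isSquareCorner_deleteIncidenceSet hw').expands

theorem Expands.joinable {B : SimpleGraph V} (hG : G.Colorable 2) (hA : Expands A G)
    (hB : Expands B G) : Joinable (branchSet G) A B := by
  obtain ⟨v, w, h, rfl⟩ | ⟨u, p, q, v, h, rfl⟩ | ⟨x, y, z, w, h, rfl⟩ := hA.exists_reduction <;>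
  obtain ⟨v', w', h', rfl⟩ | ⟨u', p', q', v', h', rfl⟩ | ⟨x', y', z', w', h', rfl⟩ :=
    hB.exists_reduction
  · exact h.joinable h'
  · exact h.joinable_isThread h'
  · exact h.joinable_isSquareCorner h'
  · exact (h'.joinable_isThread h).symm
  · exact h.joinable h'
  · exact (h'.joinable_isThread hG h).symm
  · exact (h'.joinable_isSquareCorner h).symm
  · exact h.joinable_isThread hG h'
  · exact h.joinable h'

end Confluence

section ReflTransGen
variable {H : SimpleGraph V}

theorem finite_edgeSet_of_reflTransGen_expands (h : ReflTransGen Expands H G)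
    (hH : H.edgeSet.Finite) : G.edgeSet.Finite := by
  induction h with
  | refl => exact hH
  | tail _ hAG ih => exact hAG.finite_edgeSet_iff.2 ih

theorem colorable_of_reflTransGen_expands (h : ReflTransGen Expands H G) {n : ℕ}
    (hH : H.Colorable n) : G.Colorable n := by
  induction h with
  | refl => exact hH
  | tail _ hAG ih => exact ih.of_hom hAG.nonempty_hom.some

theorem branchSet_subset_of_reflTransGen_expands (h : ReflTransGen Expands H G) :
    branchSet H ⊆ branchSet G := by
  induction h with
  | refl => exact subset_rfl
  | tail _ hAG ih => exact ih.trans hAG.branchSet_subset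

theorem eq_or_ncard_edgeSet_lt_of_reflTransGen_expands (h : ReflTransGen Expands H G)
    (hH : H.edgeSet.Finite) : G = H ∨ H.edgeSet.ncard < G.edgeSet.ncard := by
  induction h with
  | refl => exact .inl rfl
  | tail hHA hAG ih =>
    have hlt := hAG.ncard_edgeSet_lt (finite_edgeSet_of_reflTransGen_expands hHA hH)
    obtain rfl | ih := ih
    · exact .inr hlt
    · exact .inr (ih.trans hlt)

theorem reflTransGen_expands_of_symmGen (hfin : H.edgeSet.Finite) (hbip : H.Colorable 2)
    (hdeg : H.support ⊆ branchSet H) (h : ReflTransGen (SymmGen Expands) H G) :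
    ReflTransGen Expands H G := by
  refine reflTransGen_of_symmGen (fun _ hA ↦ hA.not_support_subset_branchSet hdeg)
    (fun C hC ↦ Expands.acc_of_finite_edgeSet (finite_edgeSet_of_reflTransGen_expands hC hfin))
    (fun A B C hC hA hB ↦ ?_) h
  obtain ⟨A', B', hA', hB', hAB⟩ := hA.joinable (colorable_of_reflTransGen_expands hC hbip) hB
  obtain ⟨σ, hσ, rfl⟩ := hAB.symm
  refine ⟨A', _, hA', hB', reflTransGen_expands_comap fun v hv ↦ hσ v ?_⟩
  exact branchSet_subset_of_reflTransGen_expands hC (hdeg hv)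

end ReflTransGen

theorem stmt_7_general {H H' : SimpleGraph V} (hfin : H.edgeSet.Finite) (hbip : H.Colorable 2)
    (hdeg : ∀ v ∈ H.support, 3 ≤ (H.neighborSet v).ncard) (hne : H' ≠ H)
    (h : ReflTransGen (SymmGen Expands) H H') : H.edgeSet.ncard < H'.edgeSet.ncard := by
  have hbranch : H.support ⊆ branchSet H := fun v hv ↦
    (Nat.cast_le.2 (hdeg v hv)).trans (Set.ncard_le_encard _)
  have hforward := reflTransGen_expands_of_symmGen hfin hbip hbranch h
  exact (eq_or_ncard_edgeSet_lt_of_reflTransGen_expands hforward hfin).resolve_left hne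

end GraphExpansion

theorem expands_of_opFwd {H G : SimpleGraph ℕ} (h : OpFwd H G) : Expands H G := by
  obtain ⟨v, w, hv, hw, rfl⟩ | ⟨u, v, p, q, huv, hp, hq, hpq, rfl⟩ |
    ⟨x, y, z, w, hxy, hn, hxz, hyz, hw, rfl⟩ := h
  · exact .pendant hv hw
  · exact .subdivide huv hp hq hpq
  · exact .square hxy hn hxz hyz hw

theorem symmGen_expands_of_opAny {H G : SimpleGraph ℕ} (h : OpAny H G) :
    Relation.SymmGen Expands H G :=
  h.imp expands_of_opFwd expands_of_opFwd

/-- If `H` is bipartite with finitely many edges, every support vertex of `H` has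
degree at least `3`, and `H' ≠ H` is obtained from `H` by a finite sequence of
operations (I), (II), (III), (I'), (II'), (III'), then `H'` has strictly more
edges than `H`. -/
theorem stmt_7 (H H' : SimpleGraph ℕ) (hfin : H.edgeSet.Finite)
    (hbip : H.Colorable 2)
    (hdeg : ∀ v ∈ H.support, 3 ≤ (H.neighborSet v).ncard)
    (hne : H' ≠ H) (h : Relation.ReflTransGen OpAny H H') :
    H.edgeSet.ncard < H'.edgeSet.ncard := by
  exact stmt_7_general hfin hbip hdeg hne <|
    Relation.ReflTransGen.mono (fun _ _ ↦ symmGen_expands_of_opAny) _ _ h
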